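/- arXiv:2501.00766 — 3 statements merged into one kernel-verified Lean document; each statement's English description precedes it below -/
import Mathlib

section
/- Let Σ be a first-order signature, let 𝒦 be a class of Σ-structures, let Δ denote the set of all basic Horn formulas φ such that every structure in 𝒦 satisfies φ, and let A be a Σ-structure satisfying every formula in Δ. Let 𝒦′ be the class of all Σ(A)-structures B with B|_Σ ∈ 𝒦. Then for every finite set Θ ⊆ diag⁺(A) and every set Ξ ⊆ diag⁻(A) with at most one element, there exists a structure B ∈ 𝒦′ such that B ⊨ Θ ∪ Ξ. -/
/-!
Common definitions: products, reduced products, basic Horn formulas,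
bundled structures, diagrams, units.
-/

namespace ZFHorn

open FirstOrder Language Structure Filter Set

universe u v w u' v' w'

variable {L : FirstOrder.Language.{v, w}}

/-- The direct product structure on a dependent function type. -/
instance piStructure {ι : Type*} (M : ι → Type*) [∀ i, L.Structure (M i)] :
    L.Structure (∀ i, M i) where
  funMap f x i := funMap f fun k => x k i
  RelMap r x := ∀ i, RelMap r fun k => x k i

/-- The reduced-product prestructure on `∀ i, M i` modulo a filter `F`:
functions act coordinatewise, and a relation holds precisely when it holds on a
set of coordinates belonging to `F`. -/
instance reducedProductPrestructure {ι : Type*} (F : Filter ι) (M : ι → Type*)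
    [∀ i, L.Structure (M i)] : L.Prestructure (F.productSetoid M) :=
  { toStructure :=
      { funMap := fun {_} f x i => funMap f fun k => x k i
        RelMap := fun {_} r x => ∀ᶠ i in F, RelMap r fun k => x k i }
    fun_equiv := fun {n} f x y xy => by
      refine mem_of_superset (iInter_mem.2 xy) fun i hi => ?_
      simp only [Set.mem_iInter, Set.mem_setOf_eq] at hi
      simp only [Set.mem_setOf_eq, hi]
    rel_equiv := fun {n} r x y xy => by
      rw [← iff_eq_eq]
      constructor
      · intro hx
        refine mem_of_superset (inter_mem hx (iInter_mem.2 xy)) ?_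
        rintro i ⟨h1, h2⟩
        simp only [Set.mem_iInter, Set.mem_setOf_eq] at *
        rw [← funext h2]
        exact h1
      · intro hy
        refine mem_of_superset (inter_mem hy (iInter_mem.2 xy)) ?_
        rintro i ⟨h1, h2⟩
        simp only [Set.mem_iInter, Set.mem_setOf_eq] at *
        rw [funext h2]
        exact h1 }

/-- The reduced product `∏_F M i` of a family of structures modulo a filter,
as a first-order structure. -/
instance reducedProductStructure {ι : Type*} (F : Filter ι) (M : ι → Type*)
    [∀ i, L.Structure (M i)] : L.Structure (F.Product M) :=
  Language.quotientStructure

instance productNonempty {ι : Type*} (F : Filter ι) (M : ι → Type*)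
    [∀ i, Nonempty (M i)] : Nonempty (F.Product M) :=
  ⟨(↑(fun i => Classical.arbitrary (M i)) : F.Product M)⟩

section Horn

variable {α : Type u'}

/-- `orList φ [ψ₁, …, ψₖ]` is the disjunction `φ ∨ ψ₁ ∨ ⋯ ∨ ψₖ`. -/
def orList : L.Formula α → List (L.Formula α) → L.Formula α
  | φ, [] => φ
  | φ, ψ :: l => φ ⊔ orList ψ l

/-- A list of formulas is a Horn list if each member is atomic or the negation of
an atomic formula, and at most one member is atomic. -/
def IsHornList (l : List (L.Formula α)) : Prop :=
  (∀ χ ∈ l, BoundedFormula.IsAtomic χ ∨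
      ∃ θ : L.Formula α, BoundedFormula.IsAtomic θ ∧ χ = θ.not) ∧
    ∀ i j : Fin l.length,
      BoundedFormula.IsAtomic (l.get i) → BoundedFormula.IsAtomic (l.get j) → i = j

/-- A basic Horn formula is a disjunction `φ₀ ∨ ⋯ ∨ φₙ` in which at most one
disjunct is atomic, the rest being negations of atomic formulas. -/
def IsBasicHorn (φ : L.Formula α) : Prop :=
  ∃ (ψ : L.Formula α) (l : List (L.Formula α)), φ = orList ψ l ∧ IsHornList (ψ :: l)

/-- A strict basic Horn formula (quasi-identity) is a basic Horn formula in which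
at least one disjunct is atomic. -/
def IsQuasiIdentity (φ : L.Formula α) : Prop :=
  ∃ (ψ : L.Formula α) (l : List (L.Formula α)), φ = orList ψ l ∧ IsHornList (ψ :: l) ∧
    ∃ χ ∈ ψ :: l, BoundedFormula.IsAtomic χ

end Horn

/-- `SatAll M φ` means that every assignment of the free variables satisfies `φ` in `M`. -/
def SatAll (M : Type u') [L.Structure M] {α : Type v'} (φ : L.Formula α) : Prop :=
  ∀ v : α → M, φ.Realize v

/-- A unit is a one-element structure in which every relation holds. -/
def IsUnit (L : FirstOrder.Language.{v, w}) (M : Type u') [L.Structure M] : Prop :=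
  (∃ a : M, ∀ b : M, b = a) ∧
    ∀ (n : ℕ) (r : L.Relations n) (x : Fin n → M), RelMap r x

/-- A bundled nonempty `L`-structure. -/
structure SStruct (L : FirstOrder.Language.{v, w}) : Type (max (u + 1) v w) where
  /-- the underlying type -/
  carrier : Type u
  /-- the structure on the underlying type -/
  struc : L.Structure carrier
  /-- the underlying type is nonempty -/
  nonempty : Nonempty carrier

attribute [instance] SStruct.struc SStruct.nonempty

instance : CoeSort (SStruct.{u} L) (Type u) :=
  ⟨SStruct.carrier⟩

/-- Bundle a nonempty structure. -/
def SStruct.of (M : Type u) [i : L.Structure M] [h : Nonempty M] : SStruct.{u} L :=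
  ⟨M, i, h⟩

variable (L)

/-- A class of structures is closed under isomorphisms. -/
def ClosedUnderIso (K : Set (SStruct.{u} L)) : Prop :=
  ∀ M ∈ K, ∀ N : SStruct.{u} L, Nonempty ((M : Type u) ≃[L] (N : Type u)) → N ∈ K

/-- A class of structures is closed under (nonempty) substructures. -/
def ClosedUnderSubstructures (K : Set (SStruct.{u} L)) : Prop :=
  ∀ M ∈ K, ∀ (S : L.Substructure (M : Type u)) (h : Nonempty S),
    (⟨S, inferInstance, h⟩ : SStruct.{u} L) ∈ K

/-- A class of structures is closed under reduced products (modulo proper filters). -/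
def ClosedUnderReducedProducts (K : Set (SStruct.{u} L)) : Prop :=
  ∀ (ι : Type u) (F : Filter ι), F.NeBot → ∀ B : ι → SStruct.{u} L, (∀ i, B i ∈ K) →
    (⟨F.Product fun i => (B i : Type u), inferInstance, inferInstance⟩ : SStruct.{u} L) ∈ K

/-- A class of structures is closed under homomorphic images. -/
def ClosedUnderHomImages (K : Set (SStruct.{u} L)) : Prop :=
  ∀ M ∈ K, ∀ (N : SStruct.{u} L) (f : (M : Type u) →[L] (N : Type u)),
    Function.Surjective f → N ∈ K

/-- A class of structures is closed under direct products. -/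
def ClosedUnderProducts (K : Set (SStruct.{u} L)) : Prop :=
  ∀ (ι : Type u) (B : ι → SStruct.{u} L), (∀ i, B i ∈ K) →
    (⟨∀ i, (B i : Type u), inferInstance, inferInstance⟩ : SStruct.{u} L) ∈ K

/-- A class of structures is axiomatized by a set of formulas `Γ` if it consists
exactly of those structures satisfying every formula of `Γ`. -/
def AxiomatizedBy (K : Set (SStruct.{u} L)) (Γ : Set (L.Formula ℕ)) : Prop :=
  ∀ M : SStruct.{u} L, M ∈ K ↔ ∀ φ ∈ Γ, SatAll (M : Type u) φ

/-- The positive diagram of `A`: all atomic `Σ(A)`-sentences true in `A`. -/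
def DiagPlus (A : Type u') [L.Structure A] : Set ((L[[A]]).Sentence) :=
  {φ | BoundedFormula.IsAtomic φ ∧ A ⊨ φ}

/-- The negative diagram of `A`: all negated atomic `Σ(A)`-sentences true in `A`. -/
def DiagMinus (A : Type u') [L.Structure A] : Set ((L[[A]]).Sentence) :=
  {φ | ∃ ψ : (L[[A]]).Sentence, BoundedFormula.IsAtomic ψ ∧ φ = ψ.not ∧ A ⊨ φ}

/-- The diagram of `A`. -/
def Diag (A : Type u') [L.Structure A] : Set ((L[[A]]).Sentence) :=
  DiagPlus L A ∪ DiagMinus L A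

/-!
Suppose no `Σ(A)`-structure over `K` satisfied `Θ ∪ Ξ`, where `Θ = {θ₁, …, θₙ}` and `Ξ = {¬χ}`.
Replacing the constants by variables, this says that the basic Horn formula
`χ ∨ ¬θ₁ ∨ ⋯ ∨ ¬θₙ` is valid in `K`, hence in `A`; but it fails in `A` when each variable is
assigned the element whose constant it replaces. If `Ξ` is empty, `χ` is left out; if `Θ` is empty
as well, the disjunction is empty and `¬ x = x` takes its place.
-/

section HornFormulas

variable {L} {α : Type u'} {β : Type v'}

theorem realize_orList {M : Type w'} [L.Structure M] {x : α → M} {φ : L.Formula α}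
    {l : List (L.Formula α)} : (orList φ l).Realize x ↔ ∃ χ ∈ φ :: l, Formula.Realize χ x := by
  induction l generalizing φ with
  | nil => simp [orList]
  | cons ψ l ih =>
    rw [orList, Formula.realize_sup, ih, List.exists_mem_cons_iff (a := φ)]

theorem not_isAtomic_not (φ : L.Formula α) : ¬ BoundedFormula.IsAtomic φ.not := nofun

theorem not_injective : Function.Injective (Formula.not : L.Formula α → L.Formula α) :=
  fun _ _ h => (BoundedFormula.imp.inj h).1

theorem isAtomic_relabel {f : α → β} {φ : L.Formula α} :
    BoundedFormula.IsAtomic (φ.relabel f) ↔ BoundedFormula.IsAtomic φ := by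
  refine ⟨fun h => ?_, fun h => BoundedFormula.IsAtomic.relabel h _⟩
  cases φ with
  | equal t₁ t₂ => exact .equal t₁ t₂
  | rel R ts => exact .rel R ts
  | falsum | imp | all => cases h

theorem isAtomic_equivSentence {φ : L.Formula α} :
    BoundedFormula.IsAtomic (Formula.equivSentence φ) ↔ BoundedFormula.IsAtomic φ := by
  constructor
  · intro h
    cases φ with
    | equal t₁ t₂ => exact .equal t₁ t₂
    | rel R ts => exact .rel R ts
    | falsum | imp | all => cases h
  · rintro (⟨t₁, t₂⟩ | ⟨R, ts⟩)
    · exact .equal _ _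
    · exact .rel _ _

theorem relabel_orList (f : α → β) (φ : L.Formula α) (l : List (L.Formula α)) :
    (orList φ l).relabel f = orList (φ.relabel f) (l.map (Formula.relabel f)) := by
  induction l generalizing φ with
  | nil => rfl
  | cons ψ l ih => rw [orList, List.map_cons, orList, ← ih]; rfl

theorem IsHornList.map_relabel {l : List (L.Formula α)} (hl : IsHornList l) (f : α → β) :
    IsHornList (l.map (Formula.relabel f)) := by
  refine ⟨List.forall_mem_map.2 fun χ hχ => ?_, fun i j hi hj => ?_⟩
  · rcases hl.1 χ hχ with h | ⟨θ, hθ, rfl⟩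
    · exact .inl (isAtomic_relabel.2 h)
    · exact .inr ⟨θ.relabel f, isAtomic_relabel.2 hθ, rfl⟩
  · simp only [List.get_eq_getElem, List.getElem_map, isAtomic_relabel] at hi hj
    have := hl.2 ⟨i, by simpa using i.2⟩ ⟨j, by simpa using j.2⟩ hi hj
    simpa [Fin.ext_iff] using this

theorem IsBasicHorn.relabel {φ : L.Formula α} (hφ : IsBasicHorn φ) (f : α → β) :
    IsBasicHorn (φ.relabel f) := by
  obtain ⟨ψ, l, rfl, hl⟩ := hφ
  exact ⟨ψ.relabel f, l.map (Formula.relabel f), relabel_orList f ψ l, hl.map_relabel f⟩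

theorem isHornList_append_map_not {χs θs : List (L.Formula α)} (hlen : χs.length ≤ 1)
    (hχs : ∀ χ ∈ χs, BoundedFormula.IsAtomic χ) (hθs : ∀ θ ∈ θs, BoundedFormula.IsAtomic θ) :
    IsHornList (χs ++ θs.map Formula.not) := by
  have lt_length : ∀ i : Fin (χs ++ θs.map Formula.not).length,
      BoundedFormula.IsAtomic ((χs ++ θs.map Formula.not).get i) → i.1 < χs.length := by
    intro i hi
    by_contra! hle
    rw [List.get_eq_getElem, List.getElem_append_right hle, List.getElem_map] at hi
    exact not_isAtomic_not _ hi
  refine ⟨fun φ hφ => ?_, fun i j hi hj => ?_⟩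
  · rcases List.mem_append.1 hφ with hφ | hφ
    · exact .inl (hχs φ hφ)
    · obtain ⟨θ, hθ, rfl⟩ := List.mem_map.1 hφ
      exact .inr ⟨θ, hθs θ hθ, rfl⟩
  · have := lt_length i hi
    have := lt_length j hj
    lia

theorem realize_congr_freeVarFinset [DecidableEq α] {M : Type w'} [L.Structure M]
    {φ : L.Formula α} {x y : α → M} (h : ∀ a ∈ φ.freeVarFinset, x a = y a) :
    φ.Realize x ↔ φ.Realize y :=
  have realize_restrict {z : α → M} (hz : ∀ a ∈ φ.freeVarFinset, x a = z a) :
      (BoundedFormula.restrictFreeVar φ ((↑) : _ → α)).Realize x default ↔ φ.Realize z :=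
    BoundedFormula.realize_restrictFreeVar z fun a => hz a a.2
  (realize_restrict fun _ _ => rfl).symm.trans (realize_restrict h)

end HornFormulas

section HornTheory

variable {L} {K : Set (SStruct.{u} L)} {A : Type u'} [L.Structure A] {α : Type v'}

/-- `A` satisfies the universal Horn theory of `K`: every basic Horn formula valid in all members
of `K` is valid in `A`. The variables are indexed by `ℕ`; `SatisfiesHornTheory.satAll` passes to
arbitrary index types. -/
def SatisfiesHornTheory (K : Set (SStruct.{u} L)) (A : Type u') [L.Structure A] : Prop :=
  ∀ φ : L.Formula ℕ, IsBasicHorn φ → (∀ M ∈ K, SatAll (M : Type u) φ) → SatAll A φ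

theorem SatisfiesHornTheory.satAll [Nonempty A] (hA : SatisfiesHornTheory K A)
    {φ : L.Formula α} (hφ : IsBasicHorn φ) (hK : ∀ M ∈ K, SatAll (M : Type u) φ) :
    SatAll A φ := by
  classical
  intro g
  obtain ⟨e, he⟩ := Set.countable_iff_exists_injOn.1 φ.freeVarFinset.countable_toSet
  have e_injective : Function.Injective fun a : φ.freeVarFinset => e a := he.injective
  obtain ⟨g', hg'⟩ : ∃ g' : ℕ → A, ∀ a : φ.freeVarFinset, g' (e a) = g a :=
    ⟨_, e_injective.extend_apply (fun a => g a) fun _ => Classical.arbitrary A⟩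
  have hAe : SatAll A (φ.relabel e) :=
    hA _ (hφ.relabel e) fun M hM x => Formula.realize_relabel.2 (hK M hM (x ∘ e))
  exact (realize_congr_freeVarFinset fun a ha => hg' ⟨a, ha⟩).1 (Formula.realize_relabel.1 (hAe g'))

theorem SatisfiesHornTheory.nonempty [Nonempty A] (hA : SatisfiesHornTheory K A) :
    K.Nonempty := by
  let φ : L.Formula ℕ := Term.equal (.var 0) (.var 0)
  have hφ : IsBasicHorn φ.not :=
    ⟨φ.not, [], rfl, isHornList_append_map_not (χs := []) (θs := [φ]) (by simp) (by simp)
      (by simpa using .equal _ _)⟩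
  by_contra hK
  exact hA φ.not hφ (fun M hM => (hK ⟨M, hM⟩).elim) (fun _ => Classical.arbitrary A) rfl

theorem SatisfiesHornTheory.exists_forall_not_realize [Nonempty A]
    (hA : SatisfiesHornTheory K A) {l : List (L.Formula α)} (hl : IsHornList l) {g : α → A}
    (hg : ∀ φ ∈ l, ¬ φ.Realize g) :
    ∃ M ∈ K, ∃ x : α → (M : Type u), ∀ φ ∈ l, ¬ φ.Realize x := by
  cases l with
  | nil =>
    obtain ⟨M, hM⟩ := hA.nonempty
    exact ⟨M, hM, fun _ => Classical.arbitrary M, by simp⟩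
  | cons ψ l =>
    by_contra! hK
    obtain ⟨φ, hφ, hφg⟩ := realize_orList.1 <|
      hA.satAll ⟨ψ, l, rfl, hl⟩ (fun M hM x => realize_orList.2 (hK M hM x)) g
    exact hg φ hφ hφg

theorem SatisfiesHornTheory.exists_realize_and_not_realize [Nonempty A]
    (hA : SatisfiesHornTheory K A) {Θ X : Set (L.Formula α)} (hΘfin : Θ.Finite)
    (hXone : X.Subsingleton) (hΘ : ∀ θ ∈ Θ, BoundedFormula.IsAtomic θ)
    (hX : ∀ χ ∈ X, BoundedFormula.IsAtomic χ) {g : α → A} (hΘg : ∀ θ ∈ Θ, θ.Realize g)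
    (hXg : ∀ χ ∈ X, ¬ χ.Realize g) :
    ∃ M ∈ K, ∃ x : α → (M : Type u), (∀ θ ∈ Θ, θ.Realize x) ∧ ∀ χ ∈ X, ¬ χ.Realize x := by
  have hlen : hXone.finite.toFinset.toList.length ≤ 1 := by
    simpa [Finset.card_le_one] using fun a ha b hb => hXone ha hb
  have hl := isHornList_append_map_not hlen (θs := hΘfin.toFinset.toList)
    (by simpa using hX) (by simpa using hΘ)
  obtain ⟨M, hM, x, hx⟩ := hA.exists_forall_not_realize hl <|
    List.forall_mem_append.2 ⟨by simpa using hXg, List.forall_mem_map.2 (by simpa using hΘg)⟩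
  obtain ⟨hxX, hxΘ⟩ := List.forall_mem_append.1 hx
  exact ⟨M, hM, x, by simpa using hxΘ, by simpa using hxX⟩

end HornTheory

section Expansion

variable {L} {α : Type v'}

/-- The expansion `⟨M, x a⟩` of `M` in which the new constant symbol for `a : α` names `x a`. -/
def SStruct.withConstants (M : SStruct.{u} L) (x : α → (M : Type u)) : SStruct.{u} (L[[α]]) where
  carrier := M
  struc := letI := constantsOn.structure x; inferInstance
  nonempty := M.nonempty

theorem SStruct.withConstants_realize {M : SStruct.{u} L} {x : α → (M : Type u)}
    {φ : L.Formula α} :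
    (M.withConstants x : Type u) ⊨ Formula.equivSentence φ ↔ φ.Realize x := by
  let := constantsOn.structure x
  exact Formula.realize_equivSentence M φ

theorem finite_diagram_model_general (K : Set (SStruct.{u} L)) (A : Type u') [L.Structure A]
    [Nonempty A] (hA : SatisfiesHornTheory K A) [(L[[α]]).Structure A]
    [(L.lhomWithConstants α).IsExpansionOn A]
    (Θ : Set ((L[[α]]).Sentence)) (hΘfin : Θ.Finite)
    (hΘ : ∀ φ ∈ Θ, BoundedFormula.IsAtomic φ ∧ A ⊨ φ)
    (Ξ : Set ((L[[α]]).Sentence)) (hΞone : Ξ.Subsingleton)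
    (hΞ : ∀ φ ∈ Ξ, ∃ ψ : (L[[α]]).Sentence, BoundedFormula.IsAtomic ψ ∧ φ = ψ.not ∧ A ⊨ φ) :
    ∃ B : SStruct.{u} (L[[α]]),
      (haveI : L.Structure (B : Type u) := (L.lhomWithConstants α).reduct (B : Type u);
        (SStruct.of (B : Type u) : SStruct.{u} L) ∈ K) ∧
      ∀ φ ∈ Θ ∪ Ξ, (B : Type u) ⊨ φ := by
  let e : L.Formula α ≃ (L[[α]]).Sentence := Formula.equivSentence
  let X : Set (L.Formula α) := (fun χ => e χ.not) ⁻¹' Ξ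
  have hX : ∀ χ ∈ X, BoundedFormula.IsAtomic χ ∧ ¬ χ.Realize fun a => (L.con a : A) := by
    intro χ hχ
    obtain ⟨ψ, hψ, hχψ, hAχ⟩ := hΞ _ hχ
    obtain rfl : e χ = ψ := not_injective hχψ
    exact ⟨isAtomic_equivSentence.1 hψ, (Formula.realize_equivSentence A χ.not).1 hAχ⟩
  obtain ⟨M, hM, x, hxΘ, hxX⟩ := hA.exists_realize_and_not_realize
    (hΘfin.preimage e.injective.injOn) (hΞone.preimage (e.injective.comp not_injective))
    (fun θ hθ => isAtomic_equivSentence.1 (hΘ _ hθ).1) (fun χ hχ => (hX χ hχ).1)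
    (fun θ hθ => (Formula.realize_equivSentence A θ).1 (hΘ _ hθ).2) (fun χ hχ => (hX χ hχ).2)
  refine ⟨M.withConstants x, hM, ?_⟩
  rintro φ (hφ | hφ)
  · obtain ⟨θ, rfl⟩ := e.surjective φ
    exact SStruct.withConstants_realize.2 (hxΘ θ hφ)
  · obtain ⟨ψ, -, rfl, -⟩ := hΞ φ hφ
    obtain ⟨χ, rfl⟩ := e.surjective ψ
    exact SStruct.withConstants_realize (φ := χ.not).2 (hxX χ hφ)

end Expansion

/-- The claim in the proof of Lemma 4: if `A` satisfies every basic Horn formula valid in `K`,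
then for every finite `Θ ⊆ diag⁺(A)` and every `Ξ ⊆ diag⁻(A)` with at most one element,
some `Σ(A)`-structure whose `Σ`-reduct lies in `K` satisfies `Θ ∪ Ξ`. -/
theorem finite_diagram_model {L : FirstOrder.Language.{u, u}}
    (K : Set (SStruct.{u} L)) (A : Type u) [L.Structure A] [Nonempty A]
    (hA : ∀ φ : L.Formula ℕ, IsBasicHorn φ →
      (∀ M ∈ K, SatAll (M : Type u) φ) → SatAll A φ)
    (Θ : Set ((L[[A]]).Sentence)) (hΘfin : Θ.Finite) (hΘ : Θ ⊆ DiagPlus L A)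
    (Ξ : Set ((L[[A]]).Sentence)) (hΞ : Ξ ⊆ DiagMinus L A) (hΞone : Ξ.Subsingleton) :
    ∃ B : SStruct.{u} (L[[A]]),
      (haveI : L.Structure (B : Type u) := (L.lhomWithConstants A).reduct (B : Type u);
        (SStruct.of (B : Type u) : SStruct.{u} L) ∈ K) ∧
      ∀ φ ∈ Θ ∪ Ξ, (B : Type u) ⊨ φ :=
  finite_diagram_model_general K A hA Θ hΘfin hΘ Ξ hΞone hΞ

end ZFHorn
end

section
/- Let Σ be a first-order signature, let 𝒦 be a class of Σ-structures, let Δ denote the set of all atomic formulas φ such that every structure in 𝒦 satisfies φ, and let A be a Σ-structure satisfying every formula in Δ. Let 𝒦′ be the class of all Σ(A)-structures B with B|_Σ ∈ 𝒦. Then every sentence in diag⁻(A) has a model in 𝒦′; that is, for every ¬ξ ∈ diag⁻(A) there exists B ∈ 𝒦′ with B ⊨ ¬ξ. -/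
/-!
Common definitions: products, reduced products, basic Horn formulas,
bundled structures, diagrams, units.
-/

namespace ZFHorn

open FirstOrder Language Structure Filter Set

universe u v w u' v' w'

variable {L : FirstOrder.Language.{v, w}}

variable (L)

/-!
Read the constants of a sentence `¬ξ ∈ diag⁻(A)` as variables: this turns `ξ` into an atomic formula
over the variable set `A`, which fails in `A` when every variable is assigned to itself. It mentions
finitely many variables, so they can be renamed into any infinite set of variables, and hence it is
not valid in `K`. A falsifying assignment `A → M` with `M ∈ K` is an interpretation of the
constants in `M`, that is, an expansion of `M` to a model of `¬ξ`.
-/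

section RenamingVariables

variable {L} {M : Type*} [L.Structure M] {α : Type*} {β : Type*}

theorem realize_congr_of_eqOn_freeVarFinset [DecidableEq α] {n : ℕ} {φ : L.BoundedFormula α n}
    {v w : α → M} {xs : Fin n → M} (h : EqOn v w φ.freeVarFinset) :
    φ.Realize v xs ↔ φ.Realize w xs := by
  have hvw : v ∘ Subtype.val = w ∘ (Subtype.val : ↥(φ.freeVarFinset : Set α) → α) :=
    domRestrict_eq_domRestrict_iff.2 h
  rw [← BoundedFormula.realize_restrictFreeVar' Subset.rfl, hvw,
    BoundedFormula.realize_restrictFreeVar' Subset.rfl]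

theorem exists_eqOn_comp_of_injOn {γ : Type*} [Nonempty γ] {s : Set α} {g : α → β}
    (hg : InjOn g s) (v : α → γ) : ∃ w : β → γ, EqOn (w ∘ g) v s := by
  refine ⟨Function.extend (s.domRestrict g) (s.domRestrict v) fun _ => Classical.arbitrary γ, ?_⟩
  intro a ha
  exact hg.injective.extend_apply (s.domRestrict v) _ ⟨a, ha⟩

theorem satAll_relabel_iff [DecidableEq α] [Nonempty M] {φ : L.Formula α} {g : α → β}
    (hg : InjOn g φ.freeVarFinset) : SatAll M (φ.relabel g) ↔ SatAll M φ := by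
  constructor
  · intro h v
    obtain ⟨w, hw⟩ := exists_eqOn_comp_of_injOn hg v
    exact (realize_congr_of_eqOn_freeVarFinset hw).1 (Formula.realize_relabel.1 (h w))
  · intro h w
    exact Formula.realize_relabel.2 (h (w ∘ g))

theorem satAll_of_isAtomic_of_infinite [Nonempty M] [Infinite β] {K : Set (SStruct L)}
    (hM : ∀ φ : L.Formula β, BoundedFormula.IsAtomic φ → (∀ N ∈ K, SatAll N φ) → SatAll M φ)
    {φ : L.Formula α} (hφ : BoundedFormula.IsAtomic φ) (hK : ∀ N ∈ K, SatAll N φ) :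
    SatAll M φ := by
  classical
  have hcard : (φ.freeVarFinset : Set α).encard ≤ (univ : Set β).encard := by simp [encard_univ]
  obtain ⟨g, -, hg⟩ := φ.freeVarFinset.finite_toSet.exists_injOn_of_encard_le hcard
  have hK_relabel : ∀ N ∈ K, SatAll N (φ.relabel g) :=
    fun N hN => (satAll_relabel_iff hg).2 (hK N hN)
  exact (satAll_relabel_iff hg).1 (hM _ (hφ.relabel _) hK_relabel)

end RenamingVariables

section Constants

variable {L} {A : Type*}

theorem isAtomic_equivSentence_symm {ψ : L[[A]].Sentence} (hψ : BoundedFormula.IsAtomic ψ) :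
    BoundedFormula.IsAtomic (Formula.equivSentence.symm ψ) := by
  cases hψ with
  | equal t₁ t₂ => exact .equal _ _
  | rel R ts => exact .rel _ _

theorem models_of_satAll_equivSentence_symm [L.Structure A] {ψ : L[[A]].Sentence}
    (hψ : SatAll A (Formula.equivSentence.symm ψ)) : A ⊨ ψ :=
  (Formula.realize_equivSentence_symm_con A ψ).1 (hψ _)

/-- The expansion of `M` to a `Σ(A)`-structure in which the constant `ȧ` denotes `w a`. -/
def SStruct.expandConstants (M : SStruct L) (w : A → M) : SStruct L[[A]] :=
  letI := constantsOn.structure w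
  ⟨M, inferInstance, inferInstance⟩

theorem SStruct.of_reduct_expandConstants (M : SStruct L) (w : A → M) :
    (letI := (L.lhomWithConstants A).reduct (M.expandConstants w)
     SStruct.of (M.expandConstants w) : SStruct L) = M :=
  rfl

theorem SStruct.expandConstants_models_iff (M : SStruct L) (w : A → M) (ψ : L[[A]].Sentence) :
    M.expandConstants w ⊨ ψ ↔ (Formula.equivSentence.symm ψ).Realize w :=
  (Formula.realize_equivSentence_symm M ψ w).symm

end Constants

theorem diagMinus_sentence_model_general {L : FirstOrder.Language.{v, w}} {β : Type v'} [Infinite β]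
    (K : Set (SStruct.{u} L)) (A : Type u') [L.Structure A] [Nonempty A]
    (hA : ∀ φ : L.Formula β, BoundedFormula.IsAtomic φ →
      (∀ M ∈ K, SatAll (M : Type u) φ) → SatAll A φ)
    (φ : (L[[A]]).Sentence) (hφ : φ ∈ DiagMinus L A) :
    ∃ B : SStruct.{u} (L[[A]]),
      (letI : L.Structure (B : Type u) := (L.lhomWithConstants A).reduct (B : Type u)
       SStruct.of (B : Type u) ∈ K) ∧
      (B : Type u) ⊨ φ := by
  obtain ⟨ψ, hψ, rfl, hψA⟩ := hφ
  have hA_not : ¬ SatAll A (Formula.equivSentence.symm ψ) :=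
    mt models_of_satAll_equivSentence_symm ((Sentence.realize_not A).1 hψA)
  obtain ⟨M, hM, w, hw⟩ : ∃ M ∈ K, ∃ w : A → M, ¬ (Formula.equivSentence.symm ψ).Realize w := by
    by_contra! hK
    exact hA_not (satAll_of_isAtomic_of_infinite hA (isAtomic_equivSentence_symm hψ) hK)
  refine ⟨M.expandConstants w, ?_, ?_⟩
  · rwa [M.of_reduct_expandConstants w]
  · rwa [Sentence.realize_not, M.expandConstants_models_iff]

/-- The claim in the proof of Lemma 6: if `A` satisfies every atomic formula valid in `K`,
then every sentence of `diag⁻(A)` has a model among the `Σ(A)`-structures whose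
`Σ`-reduct lies in `K`. -/
theorem diagMinus_sentence_model {L : FirstOrder.Language.{u, u}}
    (K : Set (SStruct.{u} L)) (A : Type u) [L.Structure A] [Nonempty A]
    (hA : ∀ φ : L.Formula ℕ, BoundedFormula.IsAtomic φ →
      (∀ M ∈ K, SatAll (M : Type u) φ) → SatAll A φ)
    (φ : (L[[A]]).Sentence) (hφ : φ ∈ DiagMinus L A) :
    ∃ B : SStruct.{u} (L[[A]]),
      (haveI : L.Structure (B : Type u) := (L.lhomWithConstants A).reduct (B : Type u);
        (SStruct.of (B : Type u) : SStruct.{u} L) ∈ K) ∧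
      (B : Type u) ⊨ φ :=
  diagMinus_sentence_model_general K A hA φ hφ

end ZFHorn
end

section
/- Let Σ be a first-order signature. A class 𝒦 of Σ-structures is a variety if and only if 𝒦 is closed under homomorphic images, substructures, and products. (When Σ contains no relation symbols, this is Birkhoff's HSP theorem.) -/
/-!
Common definitions: products, reduced products, basic Horn formulas,
bundled structures, diagrams, units.
-/

namespace ZFHorn

open FirstOrder Language Structure Filter Set

universe u v w u' v' w'

variable {L : FirstOrder.Language.{v, w}}

variable (L)

/-!
Identities are preserved by surjective homomorphisms, by passing to substructures and by products,
which gives one direction. Conversely, let `A` satisfy every identity valid in `K`. For each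
identity with variables in `A` that fails somewhere in `K`, choose a structure of `K` and an
assignment refuting it. The chosen assignments form one assignment `g` into the product of the
chosen structures, and `g` realizes only identities valid in `K`. Since these hold in `A`,
sending the value of a term at `g` to its value in `A` is a well-defined homomorphism from
the substructure generated by the values of `g` onto `A`.
-/

variable {L}

section Atomic

variable {α : Type*} {n : ℕ} {φ : L.BoundedFormula α n}

theorem isAtomic_restrictFreeVar [DecidableEq α] {β : Type*} (hφ : φ.IsAtomic)
    (e : φ.freeVarFinset → β) : (φ.restrictFreeVar e).IsAtomic := by
  cases hφ with
  | equal t₁ t₂ => exact .equal _ _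
  | rel R ts => exact .rel _ _

theorem realize_comp_of_isAtomic {M N F : Type*} [L.Structure M] [L.Structure N] [FunLike F M N]
    [L.HomClass F M N] (hφ : φ.IsAtomic) (f : F) {v : α → M} {xs : Fin n → M}
    (h : φ.Realize v xs) : φ.Realize (f ∘ v) (f ∘ xs) := by
  induction hφ with
  | equal t₁ t₂ =>
    simp only [BoundedFormula.realize_bdEqual, ← Sum.comp_elim, HomClass.realize_term] at h ⊢
    exact congrArg f h
  | rel R ts =>
    simp only [BoundedFormula.realize_rel, ← Sum.comp_elim, HomClass.realize_term] at h ⊢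
    exact HomClass.map_rel f R _ h

variable {ι : Type*} {M : ι → Type*} [∀ i, L.Structure (M i)]

variable (L M) in
/-- The projection of a product of structures to its `i`-th factor, as a homomorphism. It reduces
realization in a product to realization in the factors. -/
def piEvalHom (i : ι) : (∀ i, M i) →[L] M i where
  toFun x := x i
  map_rel' _ _ h := h i

theorem realize_term_pi_apply (t : L.Term α) (v : α → ∀ i, M i) (i : ι) :
    t.realize v i = t.realize fun a => v a i :=
  (HomClass.realize_term (piEvalHom L M i)).symm

theorem realize_pi_iff_of_isAtomic (hφ : φ.IsAtomic) {v : α → ∀ i, M i}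
    {xs : Fin n → ∀ i, M i} :
    φ.Realize v xs ↔ ∀ i, φ.Realize (fun a => v a i) fun k => xs k i := by
  refine ⟨fun h i => realize_comp_of_isAtomic hφ (piEvalHom L M i) h, fun h => ?_⟩
  have elim_apply (i : ι) : (fun a => (Sum.elim v xs : _ → ∀ i, M i) a i) =
      Sum.elim (fun a => v a i) fun k => xs k i :=
    Sum.comp_elim (piEvalHom L M i) v xs
  induction hφ with
  | equal t₁ t₂ =>
    refine funext fun i => ?_
    rw [realize_term_pi_apply, realize_term_pi_apply, elim_apply]
    exact h i
  | rel R ts =>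
    intro i
    simp only [realize_term_pi_apply, elim_apply]
    exact h i

theorem realize_formula_pi_iff_of_isAtomic {φ : L.Formula α} (hφ : φ.IsAtomic)
    {v : α → ∀ i, M i} : φ.Realize v ↔ ∀ i, φ.Realize fun a => v a i := by
  simp only [Formula.Realize, realize_pi_iff_of_isAtomic hφ]
  exact forall_congr' fun i => iff_of_eq (congrArg _ (Subsingleton.elim _ _))

end Atomic

section SatAll

variable {α : Type*} {M N : Type*} [L.Structure M] [L.Structure N] {φ : L.Formula α}

theorem SatAll.of_surjective (h : SatAll M φ) (hφ : φ.IsAtomic) (f : M →[L] N)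
    (hf : Function.Surjective f) : SatAll N φ := by
  intro v
  obtain ⟨w, rfl⟩ := hf.comp_left v
  have := realize_comp_of_isAtomic hφ f (h w)
  rwa [Subsingleton.elim (f ∘ default) default] at this

theorem SatAll.of_embedding (h : SatAll N φ) (hφ : φ.IsQF) (f : M ↪[L] N) : SatAll M φ := by
  intro v
  rw [Formula.Realize, ← hφ.realize_embedding f, Subsingleton.elim (f ∘ default) default]
  exact h (f ∘ v)

theorem SatAll.pi {ι : Type*} {M : ι → Type*} [∀ i, L.Structure (M i)]
    (h : ∀ i, SatAll (M i) φ) (hφ : φ.IsAtomic) : SatAll (∀ i, M i) φ := fun _ =>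
  (realize_formula_pi_iff_of_isAtomic hφ).2 fun i => h i _

theorem satAll_restrictFreeVar_iff [DecidableEq α] [Nonempty M] {β : Type*}
    {e : φ.freeVarFinset → β} (he : Function.Injective e) :
    SatAll M (φ.restrictFreeVar e : L.Formula β) ↔ SatAll M φ := by
  have c : M := Classical.arbitrary M
  constructor
  · intro h v
    refine (BoundedFormula.realize_restrictFreeVar v fun a => ?_).1
      (h (Function.extend e (fun a => v a) fun _ => c))
    exact he.extend_apply _ _ a
  · intro h w
    refine (BoundedFormula.realize_restrictFreeVar _ fun a => ?_).2
      (h (Function.extend Subtype.val (w ∘ e) fun _ => c))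
    exact (Subtype.val_injective.extend_apply (w ∘ e) _ a).symm

end SatAll

namespace AxiomatizedBy

variable {K : Set (SStruct.{u} L)} {Γ : Set (L.Formula ℕ)}

theorem closedUnderHomImages (hK : AxiomatizedBy L K Γ) (hΓ : ∀ φ ∈ Γ, φ.IsAtomic) :
    ClosedUnderHomImages L K := fun M hM N f hf =>
  (hK N).2 fun φ hφ => ((hK M).1 hM φ hφ).of_surjective (hΓ φ hφ) f hf

theorem closedUnderSubstructures (hK : AxiomatizedBy L K Γ) (hΓ : ∀ φ ∈ Γ, φ.IsQF) :
    ClosedUnderSubstructures L K := fun M hM S _ =>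
  (hK _).2 fun φ hφ => ((hK M).1 hM φ hφ).of_embedding (hΓ φ hφ) S.subtype

theorem closedUnderProducts (hK : AxiomatizedBy L K Γ) (hΓ : ∀ φ ∈ Γ, φ.IsAtomic) :
    ClosedUnderProducts L K := fun _ B hB =>
  (hK _).2 fun φ hφ => SatAll.pi (fun i => (hK (B i)).1 (hB i) φ hφ) (hΓ φ hφ)

end AxiomatizedBy

section Generated

variable {α : Type*} {M N : Type*} [L.Structure M] [L.Structure N] {v : α → M} {w : α → N}

theorem mem_closure_range_iff_exists_term {x : M} :
    x ∈ Substructure.closure L (range v) ↔ ∃ t : L.Term α, t.realize v = x := by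
  constructor
  · rw [Substructure.mem_closure_iff_exists_term]
    rintro ⟨t, rfl⟩
    exact ⟨t.relabel (rangeSplitting v),
      Term.realize_relabel.trans (congrArg t.realize (funext (apply_rangeSplitting v)))⟩
  · rintro ⟨t, rfl⟩
    exact t.realize_mem v fun a => Substructure.subset_closure (mem_range_self a)

theorem exists_hom_closure_range
    (h : ∀ φ : L.Formula α, φ.IsAtomic → φ.Realize v → φ.Realize w) :
    ∃ f : Substructure.closure L (range v) →[L] N,
      ∀ a, f ⟨v a, Substructure.subset_closure (mem_range_self a)⟩ = w a := by
  have realize_eq {t₁ t₂ : L.Term α} (ht : t₁.realize v = t₂.realize v) :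
      t₁.realize w = t₂.realize w :=
    Formula.realize_equal.1 (h (t₁.equal t₂) (.equal _ _) (Formula.realize_equal.2 ht))
  have exists_term (x : Substructure.closure L (range v)) : ∃ t : L.Term α, t.realize v = x :=
    mem_closure_range_iff_exists_term.1 x.2
  choose τ hτ using exists_term
  refine ⟨{ toFun x := (τ x).realize w, map_fun' F x := ?_, map_rel' R x hx := ?_ },
    fun a => realize_eq (t₂ := .var a) (hτ _)⟩
  · refine realize_eq (t₂ := .func F fun k => τ (x k)) ?_
    simp only [Term.realize_func, hτ]
    rfl
  · refine Formula.realize_rel.1 (h (R.formula fun k => τ (x k)) (.rel _ _) ?_)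
    simp only [Formula.realize_rel, hτ]
    exact hx

end Generated

section Identities

/-- The identities with variables in `α` that are valid in every member of the class `K`. Those over
`ℕ` serve as axioms for `K`; those over a structure `A` decide whether `A` belongs to `K`. -/
def identities (K : Set (SStruct.{u} L)) (α : Type u') : Set (L.Formula α) :=
  {φ | φ.IsAtomic ∧ ∀ M ∈ K, SatAll (M : Type u) φ}

theorem satAll_of_forall_mem_identities {K : Set (SStruct.{u} L)} {M : Type*} [L.Structure M]
    [Nonempty M] {α β : Type*} [Infinite β] (hM : ∀ φ ∈ identities K β, SatAll M φ)
    {φ : L.Formula α} (hφ : φ ∈ identities K α) : SatAll M φ := by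
  classical
  obtain ⟨e, he⟩ := exists_injective_nat φ.freeVarFinset
  replace he := (Infinite.natEmbedding β).injective.comp he
  rw [← satAll_restrictFreeVar_iff he]
  exact hM _ ⟨isAtomic_restrictFreeVar hφ.1 _,
    fun B hB => (satAll_restrictFreeVar_iff he).2 (hφ.2 B hB)⟩

theorem small_formula [Small.{u} L.Symbols] (α : Type*) [Small.{u} α] :
    Small.{u} (L.Formula α) := by
  have small_functions : Small.{u} (Σ n, L.Functions n) :=
    small_of_injective (β := L.Symbols) Sum.inl_injective
  have small_relations : Small.{u} (Σ n, L.Relations n) :=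
    small_of_injective (β := L.Symbols) Sum.inr_injective
  have small_term (n : ℕ) : Small.{u} (L.Term (α ⊕ Fin n)) :=
    small_of_injective Term.listEncode_injective
  exact small_of_injective
    (BoundedFormula.listEncode_sigma_injective.comp (sigma_mk_injective (i := 0)))

variable {K : Set (SStruct.{u} L)} [Small.{u} L.Symbols]

theorem exists_assignment_realizing_only_identities (hP : ClosedUnderProducts L K)
    (α : Type*) [Small.{u} α] :
    ∃ P ∈ K, ∃ g : α → P, ∀ φ : L.Formula α, φ.IsAtomic → φ.Realize g → φ ∈ identities K α := by
  let Refutable : Set (L.Formula α) := {φ | ∃ M ∈ K, ∃ v : α → M, ¬ φ.Realize v}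
  have : Small.{u} (L.Formula α) := small_formula α
  let e := (equivShrink.{u} Refutable).symm
  have refuted (i) : ∃ M ∈ K, ∃ v : α → M, ¬ (e i).1.Realize v := (e i).2
  choose B hB v hv using refuted
  refine ⟨_, hP _ B hB, fun a i => v i a, fun φ hφ hg => ⟨hφ, fun M hM w => ?_⟩⟩
  by_contra hw
  obtain ⟨i, hi⟩ := e.surjective ⟨φ, M, hM, w, hw⟩
  apply hv i
  rw [hi]
  exact (realize_formula_pi_iff_of_isAtomic hφ).1 hg i

theorem mem_of_satAll_identities (hH : ClosedUnderHomImages L K)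
    (hS : ClosedUnderSubstructures L K) (hP : ClosedUnderProducts L K)
    {A : SStruct.{u} L} (hA : ∀ φ ∈ identities K A, SatAll A φ) : A ∈ K := by
  obtain ⟨P, hPK, g, hg⟩ := exists_assignment_realizing_only_identities hP A
  obtain ⟨f, hf⟩ := exists_hom_closure_range (w := id) fun φ hφ h => hA φ (hg φ hφ h) id
  have closure_nonempty : Nonempty (Substructure.closure L (range g)) :=
    (range_nonempty g).to_subtype.map (inclusion Substructure.subset_closure)
  exact hH _ (hS P hPK _ closure_nonempty) A f fun a => ⟨_, hf a⟩

theorem axiomatizedBy_identities (hH : ClosedUnderHomImages L K)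
    (hS : ClosedUnderSubstructures L K) (hP : ClosedUnderProducts L K) :
    AxiomatizedBy L K (identities K ℕ) := fun _ =>
  ⟨fun hA _ hφ => hφ.2 _ hA, fun hA => mem_of_satAll_identities hH hS hP fun _ hφ =>
    satAll_of_forall_mem_identities hA hφ⟩

end Identities

theorem variety_iff_HSP_general [Small.{u} L.Symbols] (K : Set (SStruct.{u} L)) :
    (∃ Γ : Set (L.Formula ℕ), (∀ φ ∈ Γ, φ.IsAtomic) ∧ AxiomatizedBy L K Γ) ↔
      (ClosedUnderHomImages L K ∧ ClosedUnderSubstructures L K ∧ ClosedUnderProducts L K) := by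
  constructor
  · rintro ⟨Γ, hΓ, hK⟩
    exact ⟨hK.closedUnderHomImages hΓ, hK.closedUnderSubstructures fun φ hφ => (hΓ φ hφ).isQF,
      hK.closedUnderProducts hΓ⟩
  · rintro ⟨hH, hS, hP⟩
    exact ⟨identities K ℕ, fun φ hφ => hφ.1, axiomatizedBy_identities hH hS hP⟩

/-- Birkhoff's HSP theorem for first-order structures: a class of structures is a variety
(axiomatized by a set of identities, i.e. atomic formulas) iff it is closed under
homomorphic images, substructures, and products. -/
theorem variety_iff_HSP {L : FirstOrder.Language.{u, u}}
    (K : Set (SStruct.{u} L)) :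
    (∃ Γ : Set (L.Formula ℕ), (∀ φ ∈ Γ, BoundedFormula.IsAtomic φ) ∧
        AxiomatizedBy L K Γ) ↔
      (ClosedUnderHomImages L K ∧ ClosedUnderSubstructures L K ∧
        ClosedUnderProducts L K) :=
  variety_iff_HSP_general K

end ZFHorn
end
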